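/- arXiv:1801.06148 — 3 statements merged into one kernel-verified Lean document; each statement's English description precedes it below -/
import Mathlib

section
/- For every dimension d ≥ 1, the minimal sphere covering number of ℝ^d with the ℓ^∞-norm (sup norm) equals 2: the points a_1 = (−1, 0, …, 0) and a_2 = (1, 0, …, 0) lie on the ℓ^∞-unit sphere and the ℓ^∞-unit sphere is covered by the two closed ℓ^∞-unit balls centered at a_1 and a_2, while a single point never suffices. -/
/-!
The reflection of a point `a` of a sphere of radius `r` through the centre lies on the same sphere
at distance `2 * r` from `a`, so in any real normed space one ball of radius less than `2 * r` is
not enough. In the sup norm, moving the centre of a ball along a single coordinate only affects the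
condition on that coordinate, so covering by balls centred on one coordinate axis reduces to
`[-1, 1] ⊆ [-2, 0] ∪ [0, 2]`.
-/

open Metric Set

section AntipodalPoint

variable {E : Type*} [SeminormedAddCommGroup E] [NormedSpace ℝ E] {c : E} {r s : ℝ}

theorem not_sphere_subset_closedBall {a : E} (ha : a ∈ sphere c r) (hs : s < 2 * r) :
    ¬ sphere c r ⊆ closedBall a s := by
  intro hsub
  have hreflect : Equiv.pointReflection c a ∈ sphere c r := by
    rwa [mem_sphere, dist_pointReflection_left, dist_comm]
  have hdist : 2 * r ≤ s := by
    simpa only [mem_closedBall, dist_pointReflection_right ℝ, Real.norm_two, dist_comm c,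
      mem_sphere.1 ha] using hsub hreflect
  exact hs.not_ge hdist

theorem nontrivial_of_sphere_subset_iUnion_closedBall {ι : Type*} {a : ι → E}
    (hne : (sphere c r).Nonempty) (ha : ∀ i, a i ∈ sphere c r) (hs : s < 2 * r)
    (hcover : sphere c r ⊆ ⋃ i, closedBall (a i) s) : Nontrivial ι := by
  obtain ⟨x, hx⟩ := hne
  obtain ⟨i, -⟩ := mem_iUnion.1 (hcover hx)
  by_contra hι
  have : Subsingleton ι := not_nontrivial_iff_subsingleton.1 hι
  refine not_sphere_subset_closedBall (ha i) hs (hcover.trans (iUnion_subset fun j ↦ ?_))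
  rw [Subsingleton.elim j i]

end AntipodalPoint

/-- The minimal sphere covering number of a seminormed group `E`: the least number of closed unit
balls centred on the unit sphere of `E` whose union contains this sphere. It takes the junk value
`0` when no finite family of such balls covers the sphere. -/
noncomputable def sphereCoveringNumber (E : Type*) [SeminormedAddCommGroup E] : ℕ :=
  sInf {k | ∃ a : Fin k → E, (∀ i, ‖a i‖ = 1) ∧ sphere (0 : E) 1 ⊆ ⋃ i, closedBall (a i) 1}

theorem sphereCoveringNumber_eq_two {E : Type*} [SeminormedAddCommGroup E] [NormedSpace ℝ E]
    {a b : E} (ha : ‖a‖ = 1) (hb : ‖b‖ = 1)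
    (hcover : sphere (0 : E) 1 ⊆ closedBall a 1 ∪ closedBall b 1) :
    sphereCoveringNumber E = 2 := by
  refine IsLeast.csInf_eq ⟨⟨![a, b], ?_, ?_⟩, ?_⟩
  · simp [Fin.forall_fin_two, ha, hb]
  · intro x hx
    simpa [Fin.exists_fin_two] using hcover hx
  · rintro k ⟨u, hu, hucover⟩
    have : Nontrivial (Fin k) :=
      nontrivial_of_sphere_subset_iUnion_closedBall ⟨a, mem_sphere_zero_iff_norm.2 ha⟩
        (fun i ↦ mem_sphere_zero_iff_norm.2 (hu i)) (by norm_num) hucover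
    exact Fin.nontrivial_iff_two_le.1 this

section SupNorm

variable {ι : Type*} [Fintype ι] [DecidableEq ι]

theorem mem_closedBall_single {E : ι → Type*} [∀ i, SeminormedAddCommGroup (E i)]
    {x : ∀ i, E i} {i : ι} {c : E i} {r : ℝ} (hx : x ∈ closedBall 0 r)
    (hxi : x i ∈ closedBall c r) : x ∈ closedBall (Pi.single i c) r := by
  have hr : 0 ≤ r := dist_nonneg.trans hx
  refine (dist_pi_le_iff hr).2 fun j ↦ ?_
  obtain rfl | hj := eq_or_ne j i
  · simpa using hxi
  · simpa [hj] using (dist_pi_le_iff hr).1 hx j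

theorem real_closedBall_zero_subset_union_closedBall (r : ℝ) :
    closedBall (0 : ℝ) r ⊆ closedBall (-r) r ∪ closedBall r r := by
  simp only [Real.closedBall_eq_Icc, zero_sub, zero_add, neg_add_cancel, sub_self]
  rintro t ⟨hl, hu⟩
  rcases le_total t 0 with ht | ht
  · exact Or.inl ⟨by linarith, ht⟩
  · exact Or.inr ⟨ht, by linarith⟩

theorem closedBall_zero_subset_union_closedBall_single (i : ι) (r : ℝ) :
    closedBall (0 : ι → ℝ) r ⊆
      closedBall (Pi.single i (-r)) r ∪ closedBall (Pi.single i r) r := by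
  intro x hx
  have hxi : x i ∈ closedBall (0 : ℝ) r :=
    (dist_le_pi_dist x 0 i).trans hx
  exact (real_closedBall_zero_subset_union_closedBall r hxi).imp
    (mem_closedBall_single hx) (mem_closedBall_single hx)

end SupNorm

theorem ite_val_eq_single {M : Type*} [Zero M] {d : ℕ} (i : Fin d) (c : M) :
    (fun j : Fin d ↦ if (j : ℕ) = i then c else 0) = Pi.single i c := by
  ext j
  simp only [Pi.single_apply, Fin.ext_iff]

/- On `Fin d → ℝ`, the instance norm is the sup (`ℓ^∞`) norm `‖x‖ = max_i |x i|`. -/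

/-- for every `d ≥ 1`, the minimal sphere covering number of `ℝ^d` with the
`ℓ^∞`-norm equals `2`: the points `a₁ = (−1,0,…,0)` and `a₂ = (1,0,…,0)` lie on the unit sphere
and the two closed unit balls centered at them cover the unit sphere, while a single point
never suffices. -/
theorem stmt4 (d : ℕ) (hd : 1 ≤ d) :
    let a₁ : Fin d → ℝ := fun j => if (j : ℕ) = 0 then -1 else 0
    let a₂ : Fin d → ℝ := fun j => if (j : ℕ) = 0 then 1 else 0
    ‖a₁‖ = 1 ∧ ‖a₂‖ = 1 ∧
    (Metric.sphere (0 : Fin d → ℝ) 1 ⊆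
      Metric.closedBall a₁ 1 ∪ Metric.closedBall a₂ 1) ∧
    (∀ a : Fin d → ℝ, ‖a‖ = 1 → ¬ Metric.sphere (0 : Fin d → ℝ) 1 ⊆ Metric.closedBall a 1) ∧
    sInf {k | ∃ a : Fin k → Fin d → ℝ, (∀ i, ‖a i‖ = 1) ∧
      Metric.sphere (0 : Fin d → ℝ) 1 ⊆ ⋃ i, Metric.closedBall (a i) 1} = 2 := by
  intro a₁ a₂
  have ha₁ : a₁ = Pi.single ⟨0, hd⟩ (-1) := ite_val_eq_single ⟨0, hd⟩ (-1)
  have ha₂ : a₂ = Pi.single ⟨0, hd⟩ 1 := ite_val_eq_single ⟨0, hd⟩ 1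
  have hnorm₁ : ‖a₁‖ = 1 := by rw [ha₁, Pi.norm_single, norm_neg, norm_one]
  have hnorm₂ : ‖a₂‖ = 1 := by rw [ha₂, Pi.norm_single, norm_one]
  have hcover : sphere (0 : Fin d → ℝ) 1 ⊆ closedBall a₁ 1 ∪ closedBall a₂ 1 := by
    rw [ha₁, ha₂]
    exact sphere_subset_closedBall.trans (closedBall_zero_subset_union_closedBall_single _ 1)
  refine ⟨hnorm₁, hnorm₂, hcover, fun a ha ↦ ?_, sphereCoveringNumber_eq_two hnorm₁ hnorm₂ hcover⟩
  exact not_sphere_subset_closedBall (mem_sphere_zero_iff_norm.2 ha) (by norm_num)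
end

section
/- (Static characterization.) Let p ∈ [1, ∞), let ‖·‖ be a norm on ℝ^d, and let N be an integer with N ≥ c(d, ‖·‖) + 1, or N ≥ d + 2 if ‖·‖ is induced by an inner product. If μ and ν are Borel probability measures on ℝ^d with finite p-th moments and there is a real constant C such that e_{N,p}(μ, x)^p = e_{N,p}(ν, x)^p + C for every x ∈ (ℝ^d)^N, then μ = ν (and C = 0). -/
open MeasureTheory
open scoped ENNReal NNReal

/-- The `L^p`-quantization error function at level `N`. -/
noncomputable def quantErr {E : Type*} [NormedAddCommGroup E] [MeasurableSpace E]
    (p : ℝ) (N : ℕ) (μ : Measure E) (x : Fin N → E) : ℝ :=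
  (∫⁻ ξ, ⨅ i, (‖ξ - x i‖₊ : ℝ≥0∞) ^ p ∂μ).toReal ^ (1 / p)

/-- `μ` has a finite `p`-th moment. -/
def HasFiniteMoment {E : Type*} [NormedAddCommGroup E] [MeasurableSpace E]
    (p : ℝ) (μ : Measure E) : Prop :=
  ∫⁻ ξ, (‖ξ‖₊ : ℝ≥0∞) ^ p ∂μ ≠ ∞

/-- The minimal sphere covering number `c(d, ‖·‖)`: smallest number of points on the unit
sphere whose closed unit balls cover the unit sphere. -/
noncomputable def coverNum (E : Type*) [NormedAddCommGroup E] : ℕ :=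
  sInf {k | ∃ a : Fin k → E, (∀ i, a i ∈ Metric.sphere (0 : E) 1) ∧
    Metric.sphere (0 : E) 1 ⊆ ⋃ i, Metric.closedBall (a i) 1}

/-!
Add the origin to a grid `a₁, …, aₖ` of nonzero points: the nearest-point distance to the power
`p` drops by a continuous function `φ ≥ 0` with `φ 0 > 0`, supported in the Voronoi cell of the
origin. Since the error functions of `μ` and `ν` differ by the same constant on the grids
`x + c⁻¹ aᵢ`, with and without the extra point `x`, both measures give every translate and dilate
`ξ ↦ φ (c (ξ - x))` the same integral. If the cell is bounded, `φ` has compact support, its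
dilates form an approximate identity, and hence `μ = ν`. A covering of the unit sphere by unit
balls centred on it gives such a grid with `c(d, ‖·‖)` points; in a Euclidean space, the `d + 1`
points `b₁, …, b_d, -(b₁ + ⋯ + b_d)` do, for an orthonormal basis `b`.
-/

open Filter Topology Bornology Module

section Mollification

variable {E : Type*} [NormedAddCommGroup E] [NormedSpace ℝ E] [MeasurableSpace E]

/-- The mollification of `g` at scale `c⁻¹` by the kernel `φ`, that is, the convolution of `g`
with the rescaled kernel `x ↦ c ^ d * φ (c • x)`, where `d` is the dimension of `E`. -/
noncomputable def mollify (ρ : Measure E) (φ : E → ℝ) (c : ℝ) (g : E → ℝ) (ξ : E) : ℝ :=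
  ∫ x, c ^ finrank ℝ E * φ (c • (ξ - x)) * g x ∂ρ

variable [FiniteDimensional ℝ E] [BorelSpace E] {ρ : Measure E} [ρ.IsAddHaarMeasure]
  {φ g : E → ℝ} {c : ℝ}

lemma integral_pow_finrank_mul_comp_smul_sub (φ : E → ℝ) (hc : 0 < c) (ξ : E) :
    ∫ x, c ^ finrank ℝ E * φ (c • (ξ - x)) ∂ρ = ∫ x, φ x ∂ρ := by
  rw [integral_const_mul, integral_sub_left_eq_self (fun w ↦ φ (c • w)) ρ ξ,
    Measure.integral_comp_smul_of_nonneg _ _ _ (hR := hc.le), smul_eq_mul,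
    mul_inv_cancel_left₀ (by positivity)]

lemma abs_mollify_le (hφ : 0 ≤ φ) (hφ_int : ∫ x, φ x ∂ρ = 1) {G : ℝ} (hg : ∀ x, |g x| ≤ G)
    (hc : 0 < c) (ξ : E) : |mollify ρ φ c g ξ| ≤ G := by
  have h_integrable : Integrable (fun x ↦ c ^ finrank ℝ E * φ (c • (ξ - x))) ρ :=
    (((integrable_of_integral_eq_one hφ_int).comp_smul hc.ne').comp_sub_left ξ).const_mul _
  calc |mollify ρ φ c g ξ|
      ≤ ∫ x, c ^ finrank ℝ E * φ (c • (ξ - x)) * G ∂ρ := by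
        rw [mollify, ← Real.norm_eq_abs]
        refine norm_integral_le_of_norm_le (h_integrable.mul_const G) (.of_forall fun x ↦ ?_)
        have h_kernel : 0 ≤ c ^ finrank ℝ E * φ (c • (ξ - x)) :=
          mul_nonneg (by positivity) (hφ _)
        rw [norm_mul, Real.norm_of_nonneg h_kernel]
        exact mul_le_mul_of_nonneg_left (hg x) h_kernel
    _ = G := by
        rw [integral_mul_const, integral_pow_finrank_mul_comp_smul_sub φ hc, hφ_int, one_mul]

lemma tendsto_mollify (hφ : 0 ≤ φ) (hφ_int : ∫ x, φ x ∂ρ = 1) (hφ_supp : HasCompactSupport φ)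
    (hg_int : Integrable g ρ) {ξ : E} (hg : ContinuousAt g ξ) :
    Tendsto (fun c ↦ mollify ρ φ c g ξ) atTop (𝓝 (g ξ)) := by
  have h_decay : Tendsto (fun x ↦ ‖x‖ ^ finrank ℝ E * φ x) (cobounded E) (𝓝 0) := by
    have : ProperSpace E := FiniteDimensional.proper_real E
    refine tendsto_const_nhds.congr' ?_
    rw [Metric.cobounded_eq_cocompact, ← coclosedCompact_eq_cocompact]
    filter_upwards [hasCompactSupport_iff_eventuallyEq.1 hφ_supp] with x hx
    simp [hx]
  simpa only [smul_eq_mul] using!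
    tendsto_integral_comp_smul_smul_of_integrable' hφ hφ_int h_decay hg_int hg

lemma stronglyMeasurable_mollify (hφ : Continuous φ) (hg : Continuous g) :
    StronglyMeasurable (mollify ρ φ c g) := by
  have h_kernel : Continuous fun z : E × E ↦
      c ^ finrank ℝ E * φ (c • (z.1 - z.2)) * g z.2 := by fun_prop
  exact h_kernel.stronglyMeasurable.integral_prod_right

lemma tendsto_integral_mollify (hφ : Continuous φ) (hφ_supp : HasCompactSupport φ)
    (hφ_nonneg : 0 ≤ φ) (hφ_int : ∫ x, φ x ∂ρ = 1) (hg : Continuous g)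
    (hg_supp : HasCompactSupport g) (μ : Measure E) [IsFiniteMeasure μ] :
    Tendsto (fun c ↦ ∫ ξ, mollify ρ φ c g ξ ∂μ) atTop (𝓝 (∫ ξ, g ξ ∂μ)) := by
  obtain ⟨G, hG⟩ := hg.bounded_above_of_compact_support hg_supp
  refine tendsto_integral_filter_of_dominated_convergence (fun _ ↦ G)
    (.of_forall fun c ↦ (stronglyMeasurable_mollify hφ hg).aestronglyMeasurable)
    ?_ (integrable_const G) (.of_forall fun ξ ↦ ?_)
  · filter_upwards [eventually_gt_atTop 0] with c hc
    exact .of_forall fun ξ ↦ abs_mollify_le hφ_nonneg hφ_int hG hc ξ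
  · exact tendsto_mollify hφ_nonneg hφ_int hφ_supp
      (hg.integrable_of_hasCompactSupport hg_supp) hg.continuousAt

lemma integral_mollify (hφ : Continuous φ) (hφ_supp : HasCompactSupport φ)
    (hg_int : Integrable g ρ) (μ : Measure E) [IsFiniteMeasure μ] (c : ℝ) :
    ∫ ξ, mollify ρ φ c g ξ ∂μ =
      ∫ x, c ^ finrank ℝ E * (∫ ξ, φ (c • (ξ - x)) ∂μ) * g x ∂ρ := by
  obtain ⟨K, hK⟩ := hφ.bounded_above_of_compact_support hφ_supp
  have h_integrable : Integrable
      (fun z : E × E ↦ c ^ finrank ℝ E * φ (c • (z.1 - z.2)) * g z.2) (μ.prod ρ) := by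
    refine ((hg_int.comp_snd μ).bdd_mul (c := K) (f := fun z : E × E ↦ φ (c • (z.1 - z.2)))
      (by fun_prop) (.of_forall fun z ↦ hK _)).const_mul (c ^ finrank ℝ E) |>.congr ?_
    exact .of_forall fun z ↦ (mul_assoc _ _ _).symm
  simp only [mollify]
  rw [integral_integral_swap h_integrable]
  simp only [integral_mul_const, integral_const_mul]

theorem measure_ext_of_integral_comp_smul_sub (hφ : Continuous φ) (hφ_supp : HasCompactSupport φ)
    (hφ_nonneg : 0 ≤ φ) {x₀ : E} (hx₀ : φ x₀ ≠ 0) {μ ν : Measure E} [IsFiniteMeasure μ]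
    [IsFiniteMeasure ν]
    (h : ∀ (x : E) (c : ℝ), 0 < c →
      ∫ ξ, φ (c • (ξ - x)) ∂μ = ∫ ξ, φ (c • (ξ - x)) ∂ν) : μ = ν := by
  have : ProperSpace E := FiniteDimensional.proper_real E
  let ρ : Measure E := Measure.addHaar
  let I := ∫ x, φ x ∂ρ
  have hI : 0 < I :=
    hφ.integral_pos_of_hasCompactSupport_nonneg_nonzero hφ_supp hφ_nonneg hx₀
  let ψ : E → ℝ := fun x ↦ I⁻¹ * φ x
  have hψ : Continuous ψ := hφ.const_mul _
  have hψ_supp : HasCompactSupport ψ := hφ_supp.mul_left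
  have hψ_nonneg : 0 ≤ ψ := fun x ↦ mul_nonneg (inv_nonneg.2 hI.le) (hφ_nonneg x)
  have hψ_int : ∫ x, ψ x ∂ρ = 1 := by rw [integral_const_mul, inv_mul_cancel₀ hI.ne']
  refine Measure.ext_of_integral_eq_on_compactlySupported fun g ↦ ?_
  have hg_int : Integrable g ρ := g.continuous.integrable_of_hasCompactSupport g.hasCompactSupport
  have h_mollify : ∀ c > 0, ∫ ξ, mollify ρ ψ c g ξ ∂μ = ∫ ξ, mollify ρ ψ c g ξ ∂ν := by
    intro c hc
    rw [integral_mollify hψ hψ_supp hg_int, integral_mollify hψ hψ_supp hg_int]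
    simp only [ψ, integral_const_mul, h _ c hc]
  have h_lim (m : Measure E) [IsFiniteMeasure m] :=
    tendsto_integral_mollify hψ hψ_supp hψ_nonneg hψ_int g.continuous g.hasCompactSupport m
  exact tendsto_nhds_unique_of_eventuallyEq (h_lim μ) (h_lim ν)
    ((eventually_gt_atTop 0).mono h_mollify)

end Mollification

section NearestDistPow

variable {E ι : Type*} [NormedAddCommGroup E]

/-- The `p`-th power of the distance from `ξ` to the nearest point of the grid `x`, the integrand
of the quantization error; for an empty grid it is `0`. -/
noncomputable def nearestDistPow (p : ℝ) (x : ι → E) (ξ : E) : ℝ :=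
  ⨅ i, ‖ξ - x i‖ ^ p

lemma nearestDistPow_nonneg (p : ℝ) (x : ι → E) (ξ : E) : 0 ≤ nearestDistPow p x ξ :=
  Real.iInf_nonneg fun _ ↦ by positivity

lemma nearestDistPow_comp {κ : Type*} {f : κ → ι} (hf : f.Surjective) (p : ℝ) (x : ι → E) :
    nearestDistPow p (x ∘ f) = nearestDistPow p x :=
  funext fun ξ ↦ hf.iInf_comp fun i ↦ ‖ξ - x i‖ ^ p

lemma nearestDistPow_smul_sub [NormedSpace ℝ E] (p : ℝ) (a : ι → E) {c : ℝ} (hc : 0 < c)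
    (x ξ : E) :
    nearestDistPow p a (c • (ξ - x)) =
      c ^ p * nearestDistPow p (fun i ↦ x + c⁻¹ • a i) ξ := by
  simp only [nearestDistPow]
  rw [Real.mul_iInf_of_nonneg (by positivity)]
  congr with i
  have h_smul : c • (ξ - x) - a i = c • (ξ - (x + c⁻¹ • a i)) := by
    rw [← sub_sub, smul_sub c (ξ - x), smul_inv_smul₀ hc.ne']
  rw [h_smul, norm_smul, Real.norm_of_nonneg hc.le, Real.mul_rpow hc.le (norm_nonneg _)]

lemma ofReal_nearestDistPow [Nonempty ι] {p : ℝ} (hp : 0 ≤ p) (x : ι → E) (ξ : E) :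
    ENNReal.ofReal (nearestDistPow p x ξ) = ⨅ i, (‖ξ - x i‖₊ : ℝ≥0∞) ^ p := by
  rw [nearestDistPow, ENNReal.ofReal_iInf]
  simp only [← ENNReal.ofReal_rpow_of_nonneg (norm_nonneg _) hp, ofReal_norm, enorm]

variable [Finite ι] {p : ℝ}

lemma nearestDistPow_le (p : ℝ) (x : ι → E) (ξ : E) (i : ι) :
    nearestDistPow p x ξ ≤ ‖ξ - x i‖ ^ p :=
  ciInf_le (Set.finite_range _).bddBelow i

variable [Nonempty ι]

lemma nearestDistPow_option_elim (p : ℝ) (x₀ : E) (x : ι → E) (ξ : E) :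
    nearestDistPow p (fun o : Option ι ↦ o.elim x₀ x) ξ =
      min (‖ξ - x₀‖ ^ p) (nearestDistPow p x ξ) := by
  rw [nearestDistPow, iInf, Option.range_eq,
    csInf_insert (Set.finite_range _).bddBelow (Set.range_nonempty _)]
  rfl

lemma continuous_nearestDistPow (hp : 0 ≤ p) (x : ι → E) :
    Continuous (nearestDistPow p x) := by
  have := Fintype.ofFinite ι
  have h_inf' : nearestDistPow p x =
      fun ξ ↦ Finset.univ.inf' Finset.univ_nonempty fun i ↦ ‖ξ - x i‖ ^ p :=
    funext fun ξ ↦ (Finset.inf'_univ_eq_ciInf _).symm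
  rw [h_inf']
  exact Continuous.finset_inf'_apply _ fun i _ ↦
    (continuous_id.sub continuous_const).norm.rpow_const fun _ ↦ .inr hp

variable [MeasurableSpace E] [BorelSpace E] {μ ν : Measure E}

lemma HasFiniteMoment.memLp_id [SecondCountableTopology E] (hp : 0 < p)
    (hμ : HasFiniteMoment p μ) : MemLp id (ENNReal.ofReal p) μ := by
  refine ⟨continuous_id.aestronglyMeasurable, ?_⟩
  rw [eLpNorm_lt_top_iff_lintegral_rpow_enorm_lt_top (by simpa using hp) ENNReal.ofReal_ne_top,
    ENNReal.toReal_ofReal hp.le]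
  exact hμ.lt_top

lemma HasFiniteMoment.integrable_norm_sub_rpow [SecondCountableTopology E] [IsFiniteMeasure μ]
    (hp : 0 < p) (hμ : HasFiniteMoment p μ) (x : E) : Integrable (fun ξ ↦ ‖ξ - x‖ ^ p) μ := by
  have h_rpow := ((hμ.memLp_id hp).sub (memLp_const x)).integrable_norm_rpow
    (by simpa using hp) ENNReal.ofReal_ne_top
  simpa [ENNReal.toReal_ofReal hp.le] using h_rpow

lemma HasFiniteMoment.integrable_nearestDistPow [SecondCountableTopology E] [IsFiniteMeasure μ]
    (hp : 0 < p) (hμ : HasFiniteMoment p μ) (x : ι → E) :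
    Integrable (nearestDistPow p x) μ := by
  obtain ⟨i⟩ := ‹Nonempty ι›
  have : Nonempty ι := ⟨i⟩
  refine (hμ.integrable_norm_sub_rpow hp (x i)).mono'
    (continuous_nearestDistPow hp.le x).aestronglyMeasurable (.of_forall fun ξ ↦ ?_)
  rw [Real.norm_of_nonneg (nearestDistPow_nonneg p x ξ)]
  exact nearestDistPow_le p x ξ i

lemma quantErr_rpow {N : ℕ} [NeZero N] (hp : 0 < p) (μ : Measure E) (x : Fin N → E) :
    quantErr p N μ x ^ p = ∫ ξ, nearestDistPow p x ξ ∂μ := by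
  rw [quantErr, ← Real.rpow_mul ENNReal.toReal_nonneg, one_div_mul_cancel hp.ne', Real.rpow_one,
    integral_eq_lintegral_of_nonneg_ae (.of_forall (nearestDistPow_nonneg p x))
      (continuous_nearestDistPow hp.le x).aestronglyMeasurable]
  simp only [ofReal_nearestDistPow hp.le]

lemma integral_nearestDistPow_eq_add {N : ℕ} (hp : 0 < p) (hN : Nat.card ι ≤ N) {C : ℝ}
    (hC : ∀ x : Fin N → E, quantErr p N μ x ^ p = quantErr p N ν x ^ p + C) (x : ι → E) :
    ∫ ξ, nearestDistPow p x ξ ∂μ = ∫ ξ, nearestDistPow p x ξ ∂ν + C := by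
  have : NeZero N := ⟨(Nat.card_pos.trans_le hN).ne'⟩
  let e : ι ↪ Fin N := (Finite.equivFin ι).toEmbedding.trans (Fin.castLEEmb hN)
  have h_surj : (Function.invFun e).Surjective := Function.invFun_surjective e.injective
  simpa only [quantErr_rpow hp, nearestDistPow_comp h_surj] using hC (x ∘ Function.invFun e)

end NearestDistPow

section VoronoiCell

variable {E ι : Type*} [NormedAddCommGroup E]

/-- The open Voronoi cell of the origin with respect to the family `a`: the points strictly
closer to `0` than to every `a i`. -/
def voronoiCell (a : ι → E) : Set E := {u | ∀ i, ‖u‖ < ‖u - a i‖}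

/-- The decrease of `nearestDistPow p a` caused by adding the origin to the grid `a`. -/
noncomputable def voronoiBump (p : ℝ) (a : ι → E) (u : E) : ℝ :=
  nearestDistPow p a u - nearestDistPow p (fun o : Option ι ↦ o.elim 0 a) u

lemma nonempty_of_isBounded_voronoiCell [NormedSpace ℝ E] [Nontrivial E] {a : ι → E}
    (ha : IsBounded (voronoiCell a)) : Nonempty ι := by
  by_contra h_empty
  rw [not_nonempty_iff] at h_empty
  have h_univ : voronoiCell a = Set.univ := Set.eq_univ_of_forall fun _ ↦ h_empty.elim
  exact NormedSpace.unbounded_univ ℝ E (h_univ ▸ ha)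

variable [Finite ι] [Nonempty ι] {p : ℝ} {a : ι → E}

lemma voronoiBump_nonneg (p : ℝ) (a : ι → E) : 0 ≤ voronoiBump p a := fun u ↦ by
  simp [voronoiBump, nearestDistPow_option_elim]

lemma continuous_voronoiBump (hp : 0 ≤ p) (a : ι → E) : Continuous (voronoiBump p a) :=
  (continuous_nearestDistPow hp _).sub (continuous_nearestDistPow hp _)

lemma support_voronoiBump_subset (hp : 0 ≤ p) (a : ι → E) :
    Function.support (voronoiBump p a) ⊆ voronoiCell a := by
  intro u hu i
  by_contra! h_closer
  have h_le : nearestDistPow p a u ≤ ‖u‖ ^ p :=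
    (nearestDistPow_le p a u i).trans (Real.rpow_le_rpow (norm_nonneg _) h_closer hp)
  exact hu (by simp [voronoiBump, nearestDistPow_option_elim, h_le])

lemma voronoiBump_zero_pos (hp : 0 < p) (ha : ∀ i, a i ≠ 0) : 0 < voronoiBump p a 0 := by
  obtain ⟨i, hi⟩ : ∃ i, ‖0 - a i‖ ^ p = nearestDistPow p a 0 := exists_eq_ciInf_of_finite
  have h_pos : 0 < nearestDistPow p a 0 := by
    have : 0 < ‖0 - a i‖ := by simpa using ha i
    rw [← hi]
    positivity
  simpa [voronoiBump, nearestDistPow_option_elim, Real.zero_rpow hp.ne', h_pos.le] using h_pos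

variable [NormedSpace ℝ E] [MeasurableSpace E] [BorelSpace E] {μ ν : Measure E}
  [IsFiniteMeasure μ] [IsFiniteMeasure ν]

lemma integral_voronoiBump_comp_smul_sub [SecondCountableTopology E] (hp : 0 < p)
    (hμ : HasFiniteMoment p μ) (a : ι → E) (x : E) {c : ℝ} (hc : 0 < c) :
    ∫ ξ, voronoiBump p a (c • (ξ - x)) ∂μ =
      c ^ p * (∫ ξ, nearestDistPow p (fun i ↦ x + c⁻¹ • a i) ξ ∂μ -
        ∫ ξ, nearestDistPow p (fun o : Option ι ↦ x + c⁻¹ • o.elim 0 a) ξ ∂μ) := by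
  simp only [voronoiBump, nearestDistPow_smul_sub p _ hc, ← mul_sub]
  rw [integral_const_mul, integral_sub (hμ.integrable_nearestDistPow hp _)
    (hμ.integrable_nearestDistPow hp _)]

theorem measure_eq_of_isBounded_voronoiCell [FiniteDimensional ℝ E] (hp : 0 < p)
    (ha : ∀ i, a i ≠ 0) (ha_bdd : IsBounded (voronoiCell a)) {N : ℕ} (hN : Nat.card ι + 1 ≤ N)
    (hμ : HasFiniteMoment p μ) (hν : HasFiniteMoment p ν) {C : ℝ}
    (hC : ∀ x : Fin N → E, quantErr p N μ x ^ p = quantErr p N ν x ^ p + C) : μ = ν := by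
  have : ProperSpace E := FiniteDimensional.proper_real E
  have h_supp : HasCompactSupport (voronoiBump p a) :=
    (ha_bdd.subset (support_voronoiBump_subset hp.le a)).isCompact_closure
  refine measure_ext_of_integral_comp_smul_sub (continuous_voronoiBump hp.le a) h_supp
    (voronoiBump_nonneg p a) (voronoiBump_zero_pos hp ha).ne' fun x c hc ↦ ?_
  have hN_option : Nat.card (Option ι) ≤ N := by rwa [Finite.card_option]
  rw [integral_voronoiBump_comp_smul_sub hp hμ a x hc,
    integral_voronoiBump_comp_smul_sub hp hν a x hc,
    integral_nearestDistPow_eq_add hp (Nat.le_of_succ_le hN) hC,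
    integral_nearestDistPow_eq_add hp hN_option hC, add_sub_add_right_eq_sub]

end VoronoiCell

section BoundedCells

variable {E : Type*} [NormedAddCommGroup E]

lemma norm_sub_le_norm_of_norm_inv_smul_sub_le_one [NormedSpace ℝ E] {u a : E} (hu : 1 ≤ ‖u‖)
    (hua : ‖‖u‖⁻¹ • u - a‖ ≤ 1) : ‖u - a‖ ≤ ‖u‖ := by
  have h_inv : ‖u‖⁻¹ ≤ 1 := inv_le_one_of_one_le₀ hu
  calc ‖u - a‖ = ‖(1 - ‖u‖⁻¹) • u + (‖u‖⁻¹ • u - a)‖ := by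
        rw [sub_smul, one_smul, sub_add_sub_cancel]
    _ ≤ (1 - ‖u‖⁻¹) * ‖u‖ + 1 := by
        refine (norm_add_le _ _).trans ?_
        rw [norm_smul, Real.norm_of_nonneg (sub_nonneg.2 h_inv)]
        gcongr
    _ = ‖u‖ := by
        rw [sub_mul, one_mul, inv_mul_cancel₀ (by positivity), sub_add_cancel]

lemma voronoiCell_subset_ball [NormedSpace ℝ E] {ι : Type*} {a : ι → E}
    (ha : Metric.sphere (0 : E) 1 ⊆ ⋃ i, Metric.closedBall (a i) 1) :
    voronoiCell a ⊆ Metric.ball 0 1 := by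
  intro u hu
  by_contra h_far
  have hu_norm : 1 ≤ ‖u‖ := by simpa using h_far
  have h_sphere : ‖u‖⁻¹ • u ∈ Metric.sphere (0 : E) 1 := by
    rw [mem_sphere_zero_iff_norm]
    exact norm_smul_inv_norm (𝕜 := ℝ) (norm_pos_iff.1 (by positivity))
  obtain ⟨i, hi⟩ := Set.mem_iUnion.1 (ha h_sphere)
  rw [mem_closedBall_iff_norm] at hi
  exact (hu i).not_ge (norm_sub_le_norm_of_norm_inv_smul_sub_le_one hu_norm hi)

lemma exists_coverNum_sphere_subset_iUnion_closedBall (E : Type*) [NormedAddCommGroup E]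
    [ProperSpace E] :
    ∃ a : Fin (coverNum E) → E, (∀ i, a i ∈ Metric.sphere (0 : E) 1) ∧
      Metric.sphere (0 : E) 1 ⊆ ⋃ i, Metric.closedBall (a i) 1 := by
  refine Nat.sInf_mem (s := {k | ∃ a : Fin k → E, (∀ i, a i ∈ Metric.sphere (0 : E) 1) ∧
    Metric.sphere (0 : E) 1 ⊆ ⋃ i, Metric.closedBall (a i) 1}) ?_
  obtain ⟨t, ht_sphere, ht_fin, ht_cover⟩ :=
    (isCompact_sphere (0 : E) 1).finite_cover_balls zero_lt_one
  obtain ⟨k, a, -, rfl⟩ := ht_fin.fin_param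
  rw [Set.biUnion_range] at ht_cover
  exact ⟨k, a, Set.range_subset_iff.1 ht_sphere,
    ht_cover.trans (Set.iUnion_mono fun _ ↦ Metric.ball_subset_closedBall)⟩

theorem exists_isBounded_voronoiCell_coverNum (E : Type*) [NormedAddCommGroup E]
    [NormedSpace ℝ E] [ProperSpace E] :
    ∃ a : Fin (coverNum E) → E, (∀ i, a i ≠ 0) ∧ IsBounded (voronoiCell a) := by
  obtain ⟨a, ha_sphere, ha_cover⟩ := exists_coverNum_sphere_subset_iUnion_closedBall E
  exact ⟨a, fun i ↦ ne_zero_of_mem_unit_sphere ⟨a i, ha_sphere i⟩,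
    Metric.isBounded_ball.subset (voronoiCell_subset_ball ha_cover)⟩

lemma mem_voronoiCell_iff_inner [InnerProductSpace ℝ E] {ι : Type*} {a : ι → E} {u : E} :
    u ∈ voronoiCell a ↔ ∀ i, 2 * inner ℝ u (a i) < ‖a i‖ ^ 2 := by
  refine forall_congr' fun i ↦ ?_
  rw [← sq_lt_sq₀ (norm_nonneg _) (norm_nonneg _), norm_sub_sq_real]
  constructor <;> intro h <;> linarith

section OrthonormalBasis

variable [InnerProductSpace ℝ E] {ι : Type*} [Fintype ι] (b : OrthonormalBasis ι ℝ E)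

lemma norm_le_sum_abs_inner_orthonormalBasis (u : E) : ‖u‖ ≤ ∑ j, |inner ℝ u (b j)| := by
  calc ‖u‖ = ‖∑ j, inner ℝ (b j) u • b j‖ := by rw [b.sum_repr']
    _ ≤ ∑ j, ‖inner ℝ (b j) u • b j‖ := norm_sum_le _ _
    _ = ∑ j, |inner ℝ u (b j)| := by
        simp only [norm_smul, b.norm_eq_one, mul_one, Real.norm_eq_abs, real_inner_comm]

lemma sum_orthonormalBasis_ne_zero [Nonempty ι] : ∑ j, b j ≠ 0 := by
  classical
  obtain ⟨i⟩ := ‹Nonempty ι›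
  intro h_zero
  have h_inner : inner ℝ (b i) (∑ j, b j) = 1 := by simp [inner_sum, b.inner_eq_ite]
  simp [h_zero] at h_inner

lemma isBounded_voronoiCell_orthonormalBasis :
    IsBounded (voronoiCell fun o : Option ι ↦ o.elim (-∑ j, b j) b) := by
  refine Metric.isBounded_closedBall.subset fun u hu ↦ mem_closedBall_zero_iff.2
    (?_ : ‖u‖ ≤ Fintype.card ι + ‖∑ j, b j‖ ^ 2 / 2)
  rw [mem_voronoiCell_iff_inner] at hu
  have h_coord (j : ι) : 2 * inner ℝ u (b j) < 1 := by
    simpa [b.norm_eq_one] using hu (some j)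
  have h_sum : -(2 * ∑ j, inner ℝ u (b j)) < ‖∑ j, b j‖ ^ 2 := by
    simpa [inner_sum] using hu none
  have h_abs (j : ι) : |inner ℝ u (b j)| ≤ 1 - inner ℝ u (b j) :=
    abs_le.2 ⟨by linarith, by linarith [h_coord j]⟩
  calc ‖u‖ ≤ ∑ j, |inner ℝ u (b j)| := norm_le_sum_abs_inner_orthonormalBasis b u
    _ ≤ ∑ j, (1 - inner ℝ u (b j)) := Finset.sum_le_sum fun j _ ↦ h_abs j
    _ = Fintype.card ι - ∑ j, inner ℝ u (b j) := by simp
    _ ≤ Fintype.card ι + ‖∑ j, b j‖ ^ 2 / 2 := by linarith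

end OrthonormalBasis

theorem exists_isBounded_voronoiCell_finrank [NormedSpace ℝ E] [FiniteDimensional ℝ E]
    [Nontrivial E] (h_inner : Nonempty (InnerProductSpace ℝ E)) :
    ∃ a : Option (Fin (finrank ℝ E)) → E, (∀ o, a o ≠ 0) ∧ IsBounded (voronoiCell a) := by
  have h_parallelogram (x y : E) :
      ‖x + y‖ * ‖x + y‖ + ‖x - y‖ * ‖x - y‖ = 2 * (‖x‖ * ‖x‖ + ‖y‖ * ‖y‖) :=
    h_inner.elim fun _ ↦ by simpa only [pow_two] using parallelogram_law_with_norm ℝ x y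
  -- The given inner product brings its own scalar multiplication, which is not definitionally
  -- the one of `E`; rebuilding it from the norm keeps the latter.
  let _ : InnerProductSpace ℝ E := .ofNorm (𝕜 := ℝ) h_parallelogram
  let b := stdOrthonormalBasis ℝ E
  have : Nonempty (Fin (finrank ℝ E)) := Fin.pos_iff_nonempty.1 finrank_pos
  refine ⟨fun o ↦ o.elim (-∑ j, b j) b, fun o ↦ ?_, isBounded_voronoiCell_orthonormalBasis b⟩
  cases o with
  | none => exact neg_ne_zero.2 (sum_orthonormalBasis_ne_zero b)
  | some j => exact b.orthonormal.ne_zero j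

end BoundedCells

theorem stmt6_general {E : Type*} [NormedAddCommGroup E] [NormedSpace ℝ E]
    [FiniteDimensional ℝ E] [MeasurableSpace E] [BorelSpace E]
    (p : ℝ) (hp : 0 < p) (N : ℕ)
    (hN : coverNum E + 1 ≤ N ∨
      (Nonempty (InnerProductSpace ℝ E) ∧ finrank ℝ E + 2 ≤ N))
    (μ ν : Measure E) [IsFiniteMeasure μ] [IsFiniteMeasure ν]
    (h_mass : Subsingleton E → μ Set.univ = ν Set.univ)
    (hμ : HasFiniteMoment p μ) (hν : HasFiniteMoment p ν)
    (C : ℝ) (hC : ∀ x : Fin N → E, quantErr p N μ x ^ p = quantErr p N ν x ^ p + C) :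
    μ = ν ∧ C = 0 := by
  suffices h_eq : μ = ν from ⟨h_eq, by simpa [h_eq] using hC 0⟩
  rcases subsingleton_or_nontrivial E with hE | hE
  · refine Measure.ext fun s _ ↦ ?_
    rcases s.eq_empty_or_nonempty with rfl | hs
    · simp only [measure_empty]
    · rw [Subsingleton.eq_univ_of_nonempty hs, h_mass hE]
  · rcases hN with hN | ⟨h_inner, hN⟩
    · have : ProperSpace E := FiniteDimensional.proper_real E
      obtain ⟨a, ha, ha_bdd⟩ := exists_isBounded_voronoiCell_coverNum E
      have := nonempty_of_isBounded_voronoiCell ha_bdd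
      exact measure_eq_of_isBounded_voronoiCell hp ha ha_bdd (by simpa using hN) hμ hν hC
    · obtain ⟨a, ha, ha_bdd⟩ := exists_isBounded_voronoiCell_finrank h_inner
      have hN_card : Nat.card (Option (Fin (finrank ℝ E))) + 1 ≤ N := by
        rwa [Finite.card_option, Nat.card_fin]
      exact measure_eq_of_isBounded_voronoiCell hp ha ha_bdd hN_card hμ hν hC

/-- static characterization: on `ℝ^d` (a finite-dimensional real normed space)
with `p ∈ [1, ∞)` and `N ≥ c(d, ‖·‖) + 1` (or `N ≥ d + 2` when the norm comes from an inner
product), if `e_{N,p}(μ, ·)^p = e_{N,p}(ν, ·)^p + C` for probability measures `μ, ν` with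
finite `p`-th moments, then `μ = ν` and `C = 0`. -/
theorem stmt6 {E : Type*} [NormedAddCommGroup E] [NormedSpace ℝ E]
    [FiniteDimensional ℝ E] [MeasurableSpace E] [BorelSpace E]
    (p : ℝ) (hp : 1 ≤ p) (N : ℕ)
    (hN : coverNum E + 1 ≤ N ∨
      (Nonempty (InnerProductSpace ℝ E) ∧ Module.finrank ℝ E + 2 ≤ N))
    (μ ν : Measure E) [IsProbabilityMeasure μ] [IsProbabilityMeasure ν]
    (hμ : HasFiniteMoment p μ) (hν : HasFiniteMoment p ν)
    (C : ℝ) (hC : ∀ x : Fin N → E, quantErr p N μ x ^ p = quantErr p N ν x ^ p + C) :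
    μ = ν ∧ C = 0 := by
  exact stmt6_general p (zero_lt_one.trans_le hp) N hN μ ν (fun _ ↦ by simp only [measure_univ])
    hμ hν C hC
end

section
/- (Static characterization in Hilbert space, N = 2, p = 2.) Let H be a separable Hilbert space and let μ, ν be Borel probability measures on H with finite second moments. If there exists a real constant C such that e_{2,2}(μ, (a, b)) = e_{2,2}(ν, (a, b)) + C for all (a, b) ∈ H², then μ = ν and C = 0. -/
open MeasureTheory
open scoped ENNReal NNReal

/-!
The constant `C` is read off far away from the origin. In `L²(μ; H)` the error of the one-point
configuration `a` is `‖id - a‖`, and in an inner product space `‖x + t • e‖ + ‖x - t • e‖` equals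
`2 * t * ‖e‖` up to an error that vanishes as `t → ∞`. Adding the hypothesis at `t • u` and
`-t • u` therefore leaves `2 * C = 0`.

The errors then coincide, and `max (A - B) 0 = A - min A B` turns them into the integrals of
`max (‖ξ - a‖ ^ 2 - ‖ξ - b‖ ^ 2) 0`. The difference of squares is affine in `ξ`, and suitable `a`
and `b` produce `2 * (⟪ξ, v⟫ - s)` for every `v ≠ 0` and every `s`: the one-dimensional marginals
of `μ` and `ν` have the same call prices, hence agree, and characteristic functions conclude.
-/

open Filter Topology RealInnerProductSpace

section InnerProductSpace

variable {E F : Type*} [NormedAddCommGroup E] [InnerProductSpace ℝ E]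
  [NormedAddCommGroup F] [InnerProductSpace ℝ F]

lemma two_mul_norm_le_norm_add_add_norm_sub {G : Type*} [SeminormedAddCommGroup G]
    [NormedSpace ℝ G] (x y : G) : 2 * ‖y‖ ≤ ‖x + y‖ + ‖x - y‖ :=
  calc 2 * ‖y‖ = ‖(2 : ℝ) • y‖ := by rw [norm_smul, Real.norm_ofNat]
    _ = ‖(x + y) - (x - y)‖ := by rw [two_smul, add_sub_sub_cancel]
    _ ≤ ‖x + y‖ + ‖x - y‖ := norm_sub_le _ _

lemma norm_add_add_norm_sub_le (x : E) {y : E} (hy : y ≠ 0) :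
    ‖x + y‖ + ‖x - y‖ ≤ 2 * ‖y‖ + ‖x‖ ^ 2 / ‖y‖ := by
  have : 0 < ‖y‖ := norm_pos_iff.2 hy
  have parallelogram := parallelogram_law_with_norm ℝ x y
  refine le_of_sq_le_sq ?_ (by positivity)
  calc (‖x + y‖ + ‖x - y‖) ^ 2
      ≤ 2 * (‖x + y‖ ^ 2 + ‖x - y‖ ^ 2) := add_sq_le
    _ = 4 * ‖y‖ ^ 2 + 4 * ‖x‖ ^ 2 := by linarith
    _ ≤ 4 * ‖y‖ ^ 2 + 4 * ‖x‖ ^ 2 + (‖x‖ ^ 2 / ‖y‖) ^ 2 := le_add_of_nonneg_right (by positivity)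
    _ = (2 * ‖y‖ + ‖x‖ ^ 2 / ‖y‖) ^ 2 := by field_simp; ring

lemma tendsto_norm_add_smul_add_norm_sub_smul_sub (x : E) {e : E} (he : e ≠ 0) :
    Tendsto (fun t : ℝ ↦ ‖x + t • e‖ + ‖x - t • e‖ - 2 * ‖t • e‖) atTop (𝓝 0) := by
  have hnorm : Tendsto (fun t : ℝ ↦ ‖t • e‖) atTop atTop := by
    simpa only [norm_smul] using
      tendsto_norm_atTop_atTop.atTop_mul_const (norm_pos_iff.2 he)
  refine squeeze_zero' (.of_forall fun t ↦ ?_) ?_ (hnorm.const_div_atTop (‖x‖ ^ 2))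
  · exact sub_nonneg.2 (two_mul_norm_le_norm_add_add_norm_sub x (t • e))
  · filter_upwards [eventually_ne_atTop 0] with t ht
    exact sub_le_iff_le_add'.2 (norm_add_add_norm_sub_le x (smul_ne_zero ht he))

lemma eq_zero_of_forall_norm_sub_smul_eq_add {x e : E} {y e' : F} {C : ℝ} (he : e ≠ 0)
    (hee' : ‖e‖ = ‖e'‖) (h : ∀ t : ℝ, ‖x - t • e‖ = ‖y - t • e'‖ + C) : C = 0 := by
  have he' : e' ≠ 0 := by rwa [← norm_ne_zero_iff, ← hee', norm_ne_zero_iff]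
  have hlim := (tendsto_norm_add_smul_add_norm_sub_smul_sub x he).sub
    (tendsto_norm_add_smul_add_norm_sub_smul_sub y he')
  have hconst (t : ℝ) : ‖x + t • e‖ + ‖x - t • e‖ - 2 * ‖t • e‖
      - (‖y + t • e'‖ + ‖y - t • e'‖ - 2 * ‖t • e'‖) = 2 * C := by
    have hneg := h (-t)
    simp only [neg_smul, sub_neg_eq_add] at hneg
    rw [h t, hneg, norm_smul, norm_smul, hee']
    ring
  simp only [hconst, sub_zero, tendsto_const_nhds_iff] at hlim
  linarith

lemma norm_sub_smul_sq_sub_norm_sub_smul_sq (x v : E) (t : ℝ) :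
    ‖x - (t - 1 / 2) • v‖ ^ 2 - ‖x - (t + 1 / 2) • v‖ ^ 2 = 2 * (⟪x, v⟫ - t * ‖v‖ ^ 2) := by
  simp only [norm_sub_sq_real, inner_smul_right, norm_smul, mul_pow, Real.norm_eq_abs, sq_abs]
  ring

end InnerProductSpace

section CallPrices

lemma tendsto_max_add_one_sub_max (s x : ℝ) :
    Tendsto (fun c : ℝ ↦ max (c * (x - s) + 1) 0 - max (c * (x - s)) 0) atTop
      (𝓝 ((Set.Ici s).indicator 1 x)) := by
  refine tendsto_nhds_of_eventually_eq ?_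
  rcases le_or_gt s x with hx | hx
  · filter_upwards [eventually_ge_atTop 0] with c hc
    have hcx : 0 ≤ c * (x - s) := mul_nonneg hc (sub_nonneg.2 hx)
    rw [max_eq_left (by linarith), max_eq_left hcx, Set.indicator_of_mem (Set.mem_Ici.2 hx)]
    simp
  · have hlim : Tendsto (fun c : ℝ ↦ c * (x - s)) atTop atBot :=
      tendsto_id.atTop_mul_const_of_neg (sub_neg.2 hx)
    filter_upwards [hlim.eventually_le_atBot (-1)] with c hc
    rw [max_eq_right (by linarith), max_eq_right (by linarith),
      Set.indicator_of_notMem (Set.notMem_Ici.2 hx), sub_zero]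

lemma tendsto_integral_max_add_one_sub_max (P : Measure ℝ) [IsFiniteMeasure P] (s : ℝ) :
    Tendsto (fun c : ℝ ↦ ∫ x, (max (c * (x - s) + 1) 0 - max (c * (x - s)) 0) ∂P) atTop
      (𝓝 (P.real (Set.Ici s))) := by
  rw [← integral_indicator_one measurableSet_Ici]
  refine tendsto_integral_filter_of_dominated_convergence (fun _ ↦ 1)
    (.of_forall fun c ↦ by fun_prop) (.of_forall fun c ↦ .of_forall fun x ↦ ?_)
    (integrable_const 1) (.of_forall (tendsto_max_add_one_sub_max s))
  rw [Real.norm_eq_abs, abs_le]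
  grind

lemma integral_max_add_one_sub_max {P : Measure ℝ} [IsFiniteMeasure P]
    (hP : Integrable (fun x ↦ x) P) {c : ℝ} (hc : 0 < c) (s : ℝ) :
    ∫ x, (max (c * (x - s) + 1) 0 - max (c * (x - s)) 0) ∂P
      = c * (∫ x, max (x - (s - 1 / c)) 0 ∂P - ∫ x, max (x - s) 0 ∂P) := by
  have hint (r : ℝ) : Integrable (fun x ↦ max (x - r) 0) P :=
    (hP.sub (integrable_const r)).pos_part
  rw [← integral_sub (hint _) (hint _), ← integral_const_mul]
  refine integral_congr_ae (.of_forall fun x ↦ ?_)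
  have hslope : c * (x - (s - 1 / c)) = c * (x - s) + 1 := by field_simp; ring
  simp only [mul_sub c (max _ _), mul_max_of_nonneg _ _ hc.le, hslope, mul_zero]

-- The tail `P (Ici s)` is minus the left derivative of the call price in the strike `s`.
theorem measure_ext_of_integral_max_sub {P Q : Measure ℝ} [IsFiniteMeasure P] [IsFiniteMeasure Q]
    (hP : Integrable (fun x ↦ x) P) (hQ : Integrable (fun x ↦ x) Q)
    (h : ∀ s : ℝ, ∫ x, max (x - s) 0 ∂P = ∫ x, max (x - s) 0 ∂Q) : P = Q := by
  refine Measure.ext_of_Ici P Q fun s ↦ ?_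
  rw [← measureReal_eq_measureReal_iff]
  refine tendsto_nhds_unique_of_eventuallyEq (tendsto_integral_max_add_one_sub_max P s)
    (tendsto_integral_max_add_one_sub_max Q s) ?_
  filter_upwards [eventually_gt_atTop 0] with c hc
  rw [integral_max_add_one_sub_max hP hc, integral_max_add_one_sub_max hQ hc, h, h]

end CallPrices

section CharFun

variable {E : Type*} [NormedAddCommGroup E] [InnerProductSpace ℝ E] [SecondCountableTopology E]
  [MeasurableSpace E] [BorelSpace E] {μ ν : Measure E} [IsFiniteMeasure μ] [IsFiniteMeasure ν]

-- On the completion, the characteristic functions agree because they agree on the dense image of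
-- `E`; this determines the measures on `E` since its Borel sets are traces of Borel sets there.
open UniformSpace in
theorem measure_ext_of_charFun (h : charFun μ = charFun ν) : μ = ν := by
  borelize (Completion E)
  have hcoe : Measurable ((↑) : E → Completion E) := (Completion.continuous_coe E).measurable
  have hcharFun (ρ : Measure E) (t : E) :
      charFun (ρ.map ((↑) : E → Completion E)) t = charFun ρ t := by
    rw [charFun_apply, charFun_apply, integral_map hcoe.aemeasurable (by fun_prop)]
    simp only [Completion.inner_coe]
  have hmap : μ.map ((↑) : E → Completion E) = ν.map (↑) :=
    Measure.ext_of_charFun <| Completion.denseRange_coe.equalizer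
      continuous_charFun continuous_charFun (funext fun t ↦ by
        simp only [Function.comp_apply, hcharFun, h])
  refine Measure.ext fun s hs ↦ ?_
  rw [BorelSpace.measurable_eq (α := E),
    (Completion.isUniformInducing_coe E).isInducing.eq_induced, borel_comap] at hs
  obtain ⟨t, ht, rfl⟩ := hs
  rw [← Measure.map_apply hcoe ht, hmap, Measure.map_apply hcoe ht]

theorem measure_ext_of_map_inner
    (h : ∀ v : E, μ.map (fun x ↦ ⟪x, v⟫) = ν.map (fun x ↦ ⟪x, v⟫)) : μ = ν := by
  have hcharFun (ρ : Measure E) (v : E) : charFun ρ v = charFun (ρ.map (fun x ↦ ⟪x, v⟫)) 1 := by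
    rw [charFun_apply, charFun_apply, integral_map (by fun_prop) (by fun_prop)]
    simp
  exact measure_ext_of_charFun (funext fun v ↦ by rw [hcharFun, h, ← hcharFun])

end CharFun

section QuantErr

variable {E : Type*} [NormedAddCommGroup E] [MeasurableSpace E] {p : ℝ} {μ : Measure E}

lemma HasFiniteMoment.memLp [SecondCountableTopology E] [OpensMeasurableSpace E] (hp : 0 < p)
    (hμ : HasFiniteMoment p μ) : MemLp (fun ξ ↦ ξ) (ENNReal.ofReal p) μ := by
  refine ⟨measurable_id.aestronglyMeasurable, ?_⟩
  rw [eLpNorm_lt_top_iff_lintegral_rpow_enorm_lt_top (by simpa) ENNReal.ofReal_ne_top,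
    ENNReal.toReal_ofReal hp.le]
  exact lt_top_iff_ne_top.2 hμ

lemma quantErr_comp_of_surjective {M N : ℕ} {f : Fin N → Fin M} (hf : f.Surjective)
    (x : Fin M → E) : quantErr p N μ (x ∘ f) = quantErr p M μ x := by
  have hinf (ξ : E) : ⨅ j, (‖ξ - x (f j)‖₊ : ℝ≥0∞) ^ p = ⨅ i, (‖ξ - x i‖₊ : ℝ≥0∞) ^ p :=
    hf.iInf_comp fun i ↦ (‖ξ - x i‖₊ : ℝ≥0∞) ^ p
  simp only [quantErr, Function.comp_apply, hinf]

lemma quantErr_const {N : ℕ} [NeZero N] (hp : 0 < p) (a : E) :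
    quantErr p N μ (fun _ ↦ a) = (eLpNorm (fun ξ ↦ ξ - a) (ENNReal.ofReal p) μ).toReal := by
  rw [eLpNorm_eq_lintegral_rpow_enorm_toReal (by simpa) ENNReal.ofReal_ne_top,
    ENNReal.toReal_ofReal hp.le, ← ENNReal.toReal_rpow]
  simp only [quantErr, ciInf_const, enorm_eq_nnnorm]

lemma quantErr_two_const [IsFiniteMeasure μ] {N : ℕ} [NeZero N] (hμ : MemLp (fun ξ ↦ ξ) 2 μ)
    (a : E) : quantErr 2 N μ (fun _ ↦ a) = ‖hμ.toLp - Lp.const 2 μ a‖ := by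
  rw [← MemLp.toLp_const, ← MemLp.toLp_sub, Lp.norm_toLp, quantErr_const two_pos,
    ENNReal.ofReal_ofNat, Pi.sub_def]

lemma quantErr_pair_rpow [OpensMeasurableSpace E] (hp : 0 < p) (a b : E) :
    quantErr p 2 μ ![a, b] ^ p = ∫ ξ, min (‖ξ - a‖ ^ p) (‖ξ - b‖ ^ p) ∂μ := by
  have hmeas (c : E) : Measurable fun ξ ↦ ‖ξ - c‖ ^ p :=
    (continuous_id.sub continuous_const).norm.measurable.pow_const p
  rw [integral_eq_lintegral_of_nonneg_ae (.of_forall fun ξ ↦ by positivity)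
    ((hmeas a).min (hmeas b)).aestronglyMeasurable, quantErr,
    ← Real.rpow_mul ENNReal.toReal_nonneg, one_div_mul_cancel hp.ne', Real.rpow_one]
  simp [← Finset.inf_univ_eq_iInf, Fin.univ_succ, ENNReal.ofReal_min,
    ← ENNReal.ofReal_rpow_of_nonneg, hp.le, enorm_eq_nnnorm]

lemma integral_max_norm_sub_sq_sub_eq {ν : Measure E} [IsFiniteMeasure μ] [IsFiniteMeasure ν]
    (hμ : MemLp (fun ξ ↦ ξ) 2 μ) (hν : MemLp (fun ξ ↦ ξ) 2 ν)
    (h : ∀ a b : E, ∫ ξ, min (‖ξ - a‖ ^ 2) (‖ξ - b‖ ^ 2) ∂μ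
      = ∫ ξ, min (‖ξ - a‖ ^ 2) (‖ξ - b‖ ^ 2) ∂ν) (a b : E) :
    ∫ ξ, max (‖ξ - a‖ ^ 2 - ‖ξ - b‖ ^ 2) 0 ∂μ = ∫ ξ, max (‖ξ - a‖ ^ 2 - ‖ξ - b‖ ^ 2) 0 ∂ν := by
  have hsplit (ρ : Measure E) [IsFiniteMeasure ρ] (hρ : MemLp (fun ξ ↦ ξ) 2 ρ) :
      ∫ ξ, max (‖ξ - a‖ ^ 2 - ‖ξ - b‖ ^ 2) 0 ∂ρ
        = ∫ ξ, min (‖ξ - a‖ ^ 2) (‖ξ - a‖ ^ 2) ∂ρ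
          - ∫ ξ, min (‖ξ - a‖ ^ 2) (‖ξ - b‖ ^ 2) ∂ρ := by
    have hint (c : E) : Integrable (fun ξ ↦ ‖ξ - c‖ ^ 2) ρ :=
      (hρ.sub (memLp_const c)).integrable_norm_pow two_ne_zero
    have hmin (b : E) : Integrable (fun ξ ↦ min (‖ξ - a‖ ^ 2) (‖ξ - b‖ ^ 2)) ρ :=
      (hint a).inf (hint b)
    rw [← integral_sub (hmin a) (hmin b)]
    congr with ξ
    grind
  rw [hsplit μ hμ, hsplit ν hν, h, h]

end QuantErr

section Characterization

variable {H : Type*} [NormedAddCommGroup H] [InnerProductSpace ℝ H] [MeasurableSpace H]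
  {μ ν : Measure H} [IsFiniteMeasure μ] [IsFiniteMeasure ν]

theorem eq_zero_of_quantErr_const_eq_add {N : ℕ} [NeZero N] (hmass : μ Set.univ = ν Set.univ)
    (hμ : MemLp (fun ξ ↦ ξ) 2 μ) (hν : MemLp (fun ξ ↦ ξ) 2 ν) {C : ℝ}
    (hC : ∀ a : H, quantErr 2 N μ (fun _ ↦ a) = quantErr 2 N ν (fun _ ↦ a) + C) : C = 0 := by
  rcases subsingleton_or_nontrivial H with _ | _
  · simpa [quantErr, Subsingleton.eq_zero, eq_comm] using hC 0
  rcases eq_zero_or_neZero μ with rfl | _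
  · have hν₀ : ν = 0 := by simpa using hmass.symm
    simpa [quantErr, hν₀, eq_comm] using hC 0
  obtain ⟨u, hu⟩ := exists_ne (0 : H)
  have hnorm (ρ : Measure H) [IsFiniteMeasure ρ] :
      ‖Lp.const 2 ρ u‖ = ‖u‖ * ρ.real Set.univ ^ (1 / (2 : ℝ)) := by
    simpa using Lp.norm_const' 2 ρ u two_ne_zero ENNReal.ofNat_ne_top
  have hconst : Lp.const 2 μ u ≠ 0 := by
    rw [← norm_pos_iff, hnorm]
    exact mul_pos (norm_pos_iff.2 hu) (Real.rpow_pos_of_pos measureReal_univ_pos _)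
  refine eq_zero_of_forall_norm_sub_smul_eq_add (x := hμ.toLp) (y := hν.toLp) hconst
    (e' := Lp.const 2 ν u) (by simp only [hnorm, measureReal_def, hmass]) fun t ↦ ?_
  have hsmul (ρ : Measure H) [IsFiniteMeasure ρ] :
      Lp.const 2 ρ (t • u) = t • Lp.const 2 ρ u := (Lp.constₗ 2 ρ ℝ).map_smul t u
  simpa only [quantErr_two_const hμ, quantErr_two_const hν, hsmul] using hC (t • u)

variable [BorelSpace H]

lemma map_inner_eq_of_integral_min_norm_sub_sq_eq
    (hμ : MemLp (fun ξ ↦ ξ) 2 μ) (hν : MemLp (fun ξ ↦ ξ) 2 ν)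
    (h : ∀ a b : H, ∫ ξ, min (‖ξ - a‖ ^ 2) (‖ξ - b‖ ^ 2) ∂μ
      = ∫ ξ, min (‖ξ - a‖ ^ 2) (‖ξ - b‖ ^ 2) ∂ν) {v : H} (hv : v ≠ 0) :
    μ.map (fun ξ ↦ ⟪ξ, v⟫) = ν.map (fun ξ ↦ ⟪ξ, v⟫) := by
  have hmeas : Measurable (fun ξ : H ↦ ⟪ξ, v⟫) := by fun_prop
  have hint (ρ : Measure H) [IsFiniteMeasure ρ] (hρ : MemLp (fun ξ ↦ ξ) 2 ρ) :
      Integrable (fun r ↦ r) (ρ.map fun ξ ↦ ⟪ξ, v⟫) :=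
    (integrable_map_measure (by fun_prop) hmeas.aemeasurable).2
      ((hρ.integrable one_le_two).inner_const v)
  refine measure_ext_of_integral_max_sub (hint μ hμ) (hint ν hν) fun s ↦ ?_
  rw [integral_map hmeas.aemeasurable (by fun_prop), integral_map hmeas.aemeasurable (by fun_prop)]
  have hcall (ξ : H) : max (‖ξ - (s / ‖v‖ ^ 2 - 1 / 2) • v‖ ^ 2
      - ‖ξ - (s / ‖v‖ ^ 2 + 1 / 2) • v‖ ^ 2) 0 = 2 * max (⟪ξ, v⟫ - s) 0 := by
    rw [norm_sub_smul_sq_sub_norm_sub_smul_sq,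
      div_mul_cancel₀ _ (pow_ne_zero 2 (norm_ne_zero_iff.2 hv)),
      mul_max_of_nonneg _ _ zero_le_two, mul_zero]
  have := integral_max_norm_sub_sq_sub_eq hμ hν h
    ((s / ‖v‖ ^ 2 - 1 / 2) • v) ((s / ‖v‖ ^ 2 + 1 / 2) • v)
  simp only [hcall, integral_const_mul] at this
  exact mul_left_cancel₀ two_ne_zero this

theorem measure_eq_of_integral_min_norm_sub_sq_eq [SecondCountableTopology H]
    (hmass : μ Set.univ = ν Set.univ)
    (hμ : MemLp (fun ξ ↦ ξ) 2 μ) (hν : MemLp (fun ξ ↦ ξ) 2 ν)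
    (h : ∀ a b : H, ∫ ξ, min (‖ξ - a‖ ^ 2) (‖ξ - b‖ ^ 2) ∂μ
      = ∫ ξ, min (‖ξ - a‖ ^ 2) (‖ξ - b‖ ^ 2) ∂ν) : μ = ν := by
  refine measure_ext_of_map_inner fun v ↦ ?_
  rcases eq_or_ne v 0 with rfl | hv
  · simp [Measure.map_const, hmass]
  · exact map_inner_eq_of_integral_min_norm_sub_sq_eq hμ hν h hv

theorem stmt12_general [TopologicalSpace.SeparableSpace H] (hmass : μ Set.univ = ν Set.univ)
    (hμ : HasFiniteMoment 2 μ) (hν : HasFiniteMoment 2 ν) {N : ℕ} (hN : 2 ≤ N)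
    (C : ℝ) (hC : ∀ x : Fin N → H, quantErr 2 N μ x = quantErr 2 N ν x + C) :
    μ = ν ∧ C = 0 := by
  have : SecondCountableTopology H := UniformSpace.secondCountable_of_separable H
  have : NeZero N := ⟨by lia⟩
  have hμ₂ : MemLp (fun ξ ↦ ξ) 2 μ := by simpa using hμ.memLp two_pos
  have hν₂ : MemLp (fun ξ ↦ ξ) 2 ν := by simpa using hν.memLp two_pos
  have hC₀ : C = 0 := eq_zero_of_quantErr_const_eq_add hmass hμ₂ hν₂ fun a ↦ hC fun _ ↦ a
  have hsurj := Function.invFun_surjective (Fin.castLE_injective hN)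
  have hpair (a b : H) : quantErr 2 2 μ ![a, b] = quantErr 2 2 ν ![a, b] := by
    simpa only [quantErr_comp_of_surjective hsurj, hC₀, add_zero] using
      hC (![a, b] ∘ Function.invFun (Fin.castLE hN))
  refine ⟨measure_eq_of_integral_min_norm_sub_sq_eq hmass hμ₂ hν₂ fun a b ↦ ?_, hC₀⟩
  simpa only [quantErr_pair_rpow two_pos, Real.rpow_two] using congrArg (· ^ (2 : ℝ)) (hpair a b)

end Characterization

/-- static characterization in Hilbert space, `N = 2`, `p = 2`: if two Borel
probability measures on a separable Hilbert space with finite second moments satisfy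
`e_{2,2}(μ, (a,b)) = e_{2,2}(ν, (a,b)) + C` for all `(a, b) ∈ H²` and a real constant `C`,
then `μ = ν` and `C = 0`. -/
theorem stmt12 {H : Type*} [NormedAddCommGroup H] [InnerProductSpace ℝ H]
    [CompleteSpace H] [TopologicalSpace.SeparableSpace H]
    [MeasurableSpace H] [BorelSpace H]
    (μ ν : Measure H) [IsProbabilityMeasure μ] [IsProbabilityMeasure ν]
    (hμ : HasFiniteMoment 2 μ) (hν : HasFiniteMoment 2 ν)
    (C : ℝ) (hC : ∀ a b : H, quantErr 2 2 μ ![a, b] = quantErr 2 2 ν ![a, b] + C) :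
    μ = ν ∧ C = 0 :=
  stmt12_general (by simp only [measure_univ]) hμ hν le_rfl C
    fun x ↦ FinVec.etaExpand_eq x ▸ hC (x 0) (x 1)
end
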